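/- Let s ∈ 𝕆 with ‖s‖ = 1 and s·(s·s) = 1. Then the triple (A, B, C) with A = L(s) (left multiplication by s), B = L(s̄), and C : x ↦ s̄·(x·s̄) = (s̄·x)·s̄ is a triality triple: B(x·y) = (C x)·(A y) for all x, y ∈ 𝕆. -/

import Mathlib

noncomputable section

/-- The octonions as the Cayley–Dickson double of the quaternions. -/
abbrev Oct : Type := Quaternion ℝ × Quaternion ℝ

namespace Oct

/-- Cayley–Dickson multiplication: (a,b)·(c,d) = (ac − d̄b, da + bc̄). -/
def mul (x y : Oct) : Oct :=
  (x.1 * y.1 - star y.2 * x.2, y.2 * x.1 + x.2 * star y.1)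

/-- The unit 1 = (1,0). -/
def one : Oct := (1, 0)

/-- Octonionic conjugation κ(a,b) = (ā, −b). -/
def conj (x : Oct) : Oct := (star x.1, -x.2)

/-- The squared Euclidean norm ‖(a,b)‖² = ‖a‖² + ‖b‖². -/
def normSq (x : Oct) : ℝ := ‖x.1‖ ^ 2 + ‖x.2‖ ^ 2

/-- Left multiplication L(s) : y ↦ s·y. -/
def L (s : Oct) : Oct → Oct := fun y => mul s y

/-- A linear automorphism of 𝕆 is an isometry if it preserves the Euclidean norm. -/
def IsIsometry (A : Oct ≃ₗ[ℝ] Oct) : Prop := ∀ x, normSq (A x) = normSq x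

/-- A triality triple: ℝ-linear isometric bijections with B(x·y) = (Cx)·(Ay). -/
def IsTriality (A B C : Oct ≃ₗ[ℝ] Oct) : Prop :=
  IsIsometry A ∧ IsIsometry B ∧ IsIsometry C ∧
    ∀ x y : Oct, B (mul x y) = mul (C x) (A y)

/-- Octonionic conjugation κ as an ℝ-linear equivalence. -/
def kappa : Oct ≃ₗ[ℝ] Oct where
  toFun := conj
  invFun := conj
  left_inv := fun x => by simp [conj]
  right_inv := fun x => by simp [conj]
  map_add' := fun x y => by simp [conj, Prod.ext_iff, star_add, neg_add, add_comm]
  map_smul' := fun r x => by simp [conj, Prod.ext_iff]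

/-- D ↦ κ∘D∘κ. -/
def conjOp (D : Oct ≃ₗ[ℝ] Oct) : Oct ≃ₗ[ℝ] Oct := kappa.trans (D.trans kappa)

/-- Triples of ℝ-linear bijections of 𝕆. -/
abbrev Triple := (Oct ≃ₗ[ℝ] Oct) × (Oct ≃ₗ[ℝ] Oct) × (Oct ≃ₗ[ℝ] Oct)

/-- The triality map τ(A,B,C) = (κBκ, κCκ, A). -/
def tauMap (T : Triple) : Triple := (conjOp T.2.1, conjOp T.2.2, T.1)

/-- The outer involution σ(A,B,C) = (B, A, κCκ). -/
def sigmaMap (T : Triple) : Triple := (T.2.1, T.1, conjOp T.2.2)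

/-- The induced map on S⁷ × S⁷: t(x,y) = (ȳ, x·ȳ). -/
def tS (p : Oct × Oct) : Oct × Oct := (conj p.2, mul p.1 (conj p.2))

/-- The swap s(x,y) = (y,x). -/
def swap (p : Oct × Oct) : Oct × Oct := (p.2, p.1)

end Oct

open Oct

/-!
The identity `s̄ (x y) = (s̄ (x s̄)) (s y)` is the left Moufang identity
`(a (x a)) z = a (x (a z))` at `a = s̄`, `z = s y`, because `s̄ (s y) = ‖s‖² y = y`.

The Moufang identity holds in every alternative ring. The octonions are alternative because
`x̄ (x y) = ‖x‖² y` and `x + x̄` is a real multiple of `1`: both `x (x y)` and `(x x) y` equal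
`2 Re(x) x y - ‖x‖² y`.
-/

/-- A not necessarily associative ring is alternative if `x x y` and `y x x` do not depend on the
bracketing. Its associator is then alternating, which gives the Moufang identities. -/
structure IsAlternative (R : Type*) [NonUnitalNonAssocRing R] : Prop where
  mul_self_mul : ∀ x y : R, x * x * y = x * (x * y)
  mul_mul_self : ∀ x y : R, y * x * x = y * (x * x)

namespace IsAlternative

variable {R : Type*} [NonUnitalNonAssocRing R]

theorem associator_self_left (h : IsAlternative R) (x y : R) : associator x x y = 0 :=
  sub_eq_zero.2 (h.mul_self_mul x y)

theorem associator_self_right (h : IsAlternative R) (x y : R) : associator y x x = 0 :=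
  sub_eq_zero.2 (h.mul_mul_self x y)

theorem associator_swap_left (h : IsAlternative R) (x y z : R) :
    associator x y z = -associator y x z := by
  have polarized := h.associator_self_left (x + y) z
  simp only [← AddMonoidHom.associator_apply, map_add, AddMonoidHom.add_apply] at polarized
  simp only [AddMonoidHom.associator_apply, h.associator_self_left, zero_add, add_zero]
    at polarized
  rw [eq_neg_iff_add_eq_zero, add_comm, polarized]

theorem associator_swap_right (h : IsAlternative R) (x y z : R) :
    associator x y z = -associator x z y := by
  have polarized := h.associator_self_right (y + z) x
  simp only [← AddMonoidHom.associator_apply, map_add, AddMonoidHom.add_apply] at polarized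
  simp only [AddMonoidHom.associator_apply, h.associator_self_right, zero_add, add_zero]
    at polarized
  rw [eq_neg_iff_add_eq_zero, add_comm, polarized]

theorem flexible (h : IsAlternative R) (x y : R) : x * y * x = x * (y * x) := by
  rw [← sub_eq_zero, ← associator_apply, h.associator_swap_right, h.associator_self_left, neg_zero]

theorem associator_self_mul (h : IsAlternative R) (a x y : R) :
    associator a (a * x) y = associator (a * a) x y - a * associator a x y := by
  have cocycle := associator_cocycle a a x y
  rw [h.associator_self_left, h.associator_self_left, zero_mul, sub_zero, add_zero] at cocycle
  rw [← sub_eq_zero, ← cocycle]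
  abel

theorem associator_self_mul_swap (h : IsAlternative R) (a x y : R) :
    associator a (a * x) y = -associator a (a * y) x := by
  rw [h.associator_self_mul, h.associator_self_mul, h.associator_swap_right (a * a) x,
    h.associator_swap_right a x, mul_neg, neg_sub_neg, neg_sub]

theorem moufang_left (h : IsAlternative R) (a x y : R) : a * (x * a) * y = a * (x * (a * y)) := by
  rw [← h.flexible, ← sub_eq_zero]
  calc
    a * x * a * y - a * (x * (a * y))
      = associator (a * x) a y + associator a x (a * y) := by
        simp only [associator_apply, sub_add_sub_cancel]
    _ = -(associator a (a * x) y + associator a (a * y) x) := by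
        rw [h.associator_swap_left (a * x), h.associator_swap_right a x, neg_add]
    _ = 0 := by rw [h.associator_self_mul_swap, neg_add_cancel, neg_zero]

end IsAlternative

theorem quaternion_re_mul_comm {R : Type*} [CommRing R] (a b : Quaternion R) :
    (a * b).re = (b * a).re := by
  simp only [Quaternion.re_mul]
  ring

namespace Oct

protected theorem mul_add (x y z : Oct) : mul x (y + z) = mul x y + mul x z := by
  ext1 <;> simp only [mul, Prod.fst_add, Prod.snd_add, star_add, mul_add, add_mul] <;> abel

protected theorem add_mul (x y z : Oct) : mul (x + y) z = mul x z + mul y z := by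
  ext1 <;> simp only [mul, Prod.fst_add, Prod.snd_add, mul_add, add_mul] <;> abel

protected theorem mul_smul_comm (r : ℝ) (x y : Oct) : mul x (r • y) = r • mul x y := by
  ext1 <;> simp [mul, smul_sub]

protected theorem smul_mul_assoc (r : ℝ) (x y : Oct) : mul (r • x) y = r • mul x y := by
  ext1 <;> simp [mul, smul_sub]

protected theorem one_mul (x : Oct) : mul one x = x := by
  simp [mul, one]

protected theorem mul_one (x : Oct) : mul x one = x := by
  simp [mul, one]

theorem conj_conj (x : Oct) : conj (conj x) = x :=
  kappa.left_inv x

theorem conj_injective : Function.Injective conj :=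
  kappa.injective

theorem conj_smul (r : ℝ) (x : Oct) : conj (r • x) = r • conj x :=
  kappa.map_smul r x

theorem conj_mul (x y : Oct) : conj (mul x y) = mul (conj y) (conj x) := by
  ext1 <;> simp [mul, conj]

theorem normSq_conj (x : Oct) : normSq (conj x) = normSq x := by
  simp [normSq, conj]

theorem normSq_eq_add_quaternion_normSq (x : Oct) :
    normSq x = Quaternion.normSq x.1 + Quaternion.normSq x.2 := by
  simp only [normSq, Quaternion.normSq_eq_norm_mul_self, sq]

theorem self_add_conj (x : Oct) : x + conj x = (2 * x.1.re) • one := by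
  ext1 <;> simp [conj, one, Quaternion.self_add_star', ← Quaternion.coe_mul_eq_smul]

theorem conj_mul_cancel_left (x y : Oct) : mul (conj x) (mul x y) = normSq x • y := by
  obtain ⟨a, b⟩ := x
  obtain ⟨c, d⟩ := y
  rw [normSq_eq_add_quaternion_normSq, add_smul]
  ext1
  · calc
      star a * (a * c - star d * b) - star (d * a + b * star c) * -b
        = star a * a * c + c * (star b * b) := by
          simp only [star_add, star_mul, star_star]
          noncomm_ring
      _ = Quaternion.normSq a • c + Quaternion.normSq b • c := by
          rw [Quaternion.star_mul_self, Quaternion.star_mul_self, Quaternion.coe_mul_eq_smul,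
            Quaternion.mul_coe_eq_smul]
  · calc
      (d * a + b * star c) * star a + -b * star (a * c - star d * b)
        = d * (a * star a) + b * star b * d := by
          simp only [star_sub, star_mul, star_star]
          noncomm_ring
      _ = Quaternion.normSq a • d + Quaternion.normSq b • d := by
          rw [Quaternion.self_mul_star, Quaternion.self_mul_star, Quaternion.coe_mul_eq_smul,
            Quaternion.mul_coe_eq_smul]

theorem mul_conj_cancel_left (x y : Oct) : mul x (mul (conj x) y) = normSq x • y := by
  simpa only [conj_conj, normSq_conj] using conj_mul_cancel_left (conj x) y

theorem mul_conj_cancel_right (x y : Oct) : mul (mul y x) (conj x) = normSq x • y := by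
  apply conj_injective
  rw [conj_mul, conj_mul, conj_conj, mul_conj_cancel_left, conj_smul]

theorem conj_mul_cancel_right (x y : Oct) : mul (mul y (conj x)) x = normSq x • y := by
  simpa only [conj_conj, normSq_conj] using mul_conj_cancel_right (conj x) y

theorem conj_mul_self (x : Oct) : mul (conj x) x = normSq x • one := by
  simpa only [Oct.mul_one] using conj_mul_cancel_left x one

theorem mul_self_mul (x y : Oct) : mul (mul x x) y = mul x (mul x y) := by
  apply add_right_cancel (b := normSq x • y)
  calc
    mul (mul x x) y + normSq x • y
      = mul (mul (x + conj x) x) y := by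
        rw [Oct.add_mul, Oct.add_mul, conj_mul_self, Oct.smul_mul_assoc, Oct.one_mul]
    _ = mul (x + conj x) (mul x y) := by
        simp only [self_add_conj, Oct.smul_mul_assoc, Oct.one_mul]
    _ = mul x (mul x y) + normSq x • y := by
        rw [Oct.add_mul, conj_mul_cancel_left]

theorem mul_mul_self (x y : Oct) : mul (mul y x) x = mul y (mul x x) := by
  apply conj_injective
  rw [conj_mul, conj_mul, conj_mul, conj_mul, mul_self_mul]

/-- The octonions as a nonassociative ring. This is not an instance because `Oct` already carries
the componentwise product of `Quaternion ℝ × Quaternion ℝ`. -/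
abbrev nonUnitalNonAssocRing : NonUnitalNonAssocRing Oct where
  __ := (inferInstance : AddCommGroup Oct)
  mul := mul
  left_distrib := Oct.mul_add
  right_distrib := Oct.add_mul
  zero_mul x := by simpa using! Oct.smul_mul_assoc 0 0 x
  mul_zero x := by simpa using! Oct.mul_smul_comm 0 x 0

theorem isAlternative : @IsAlternative Oct nonUnitalNonAssocRing :=
  @IsAlternative.mk Oct nonUnitalNonAssocRing mul_self_mul mul_mul_self

theorem flexible (x y : Oct) : mul (mul x y) x = mul x (mul y x) :=
  @IsAlternative.flexible Oct nonUnitalNonAssocRing isAlternative x y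

theorem moufang_left (a x y : Oct) : mul (mul a (mul x a)) y = mul a (mul x (mul a y)) :=
  @IsAlternative.moufang_left Oct nonUnitalNonAssocRing isAlternative a x y

theorem conj_mul_mul_eq_of_normSq_eq_one {s : Oct} (hs : normSq s = 1) (x y : Oct) :
    mul (conj s) (mul x y) = mul (mul (conj s) (mul x (conj s))) (mul s y) := by
  rw [moufang_left, conj_mul_cancel_left, hs, one_smul]

theorem normSq_mul (x y : Oct) : normSq (mul x y) = normSq x * normSq y := by
  obtain ⟨a, b⟩ := x
  obtain ⟨c, d⟩ := y
  have cross_terms_eq : (a * c * star (star d * b)).re = (d * a * star (b * star c)).re := by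
    simpa [mul_assoc] using quaternion_re_mul_comm (a * c * star b) d
  simp only [normSq_eq_add_quaternion_normSq, mul, sub_eq_add_neg, Quaternion.normSq_add, star_neg,
    mul_neg, Quaternion.re_neg, cross_terms_eq, Quaternion.normSq_neg, map_mul,
    Quaternion.normSq_star]
  ring

/-- Left multiplication by a unit octonion, with inverse left multiplication by its conjugate. -/
def mulLeftEquiv (s : Oct) (hs : normSq s = 1) : Oct ≃ₗ[ℝ] Oct where
  toFun := L s
  invFun := L (conj s)
  left_inv x := (conj_mul_cancel_left s x).trans (by rw [hs, one_smul])
  right_inv x := (mul_conj_cancel_left s x).trans (by rw [hs, one_smul])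
  map_add' := Oct.mul_add s
  map_smul' r := Oct.mul_smul_comm r s

/-- Right multiplication by a unit octonion, with inverse right multiplication by its conjugate. -/
def mulRightEquiv (s : Oct) (hs : normSq s = 1) : Oct ≃ₗ[ℝ] Oct where
  toFun x := mul x s
  invFun x := mul x (conj s)
  left_inv x := (mul_conj_cancel_right s x).trans (by rw [hs, one_smul])
  right_inv x := (conj_mul_cancel_right s x).trans (by rw [hs, one_smul])
  map_add' x y := Oct.add_mul x y s
  map_smul' r x := Oct.smul_mul_assoc r x s

theorem isIsometry_mulLeftEquiv (s : Oct) (hs : normSq s = 1) : IsIsometry (mulLeftEquiv s hs) :=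
  fun x => (normSq_mul s x).trans (by rw [hs, one_mul])

theorem isIsometry_mulRightEquiv (s : Oct) (hs : normSq s = 1) : IsIsometry (mulRightEquiv s hs) :=
  fun x => (normSq_mul x s).trans (by rw [hs, mul_one])

theorem IsIsometry.trans {A B : Oct ≃ₗ[ℝ] Oct} (hA : IsIsometry A) (hB : IsIsometry B) :
    IsIsometry (A.trans B) :=
  fun x => (hB (A x)).trans (hA x)

end Oct

theorem triality_triple_of_cube_root_general (s : Oct) (hs : normSq s = 1) :
    ∃ A B C : Oct ≃ₗ[ℝ] Oct, IsTriality A B C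
      ∧ (∀ y, A y = mul s y)
      ∧ (∀ y, B y = mul (conj s) y)
      ∧ (∀ x, C x = mul (conj s) (mul x (conj s))
          ∧ mul (conj s) (mul x (conj s)) = mul (mul (conj s) x) (conj s)) := by
  have hs_conj : normSq (conj s) = 1 := (normSq_conj s).trans hs
  let A := mulLeftEquiv s hs
  let B := mulLeftEquiv (conj s) hs_conj
  let C := (mulRightEquiv (conj s) hs_conj).trans B
  have isIsometry_A : IsIsometry A := isIsometry_mulLeftEquiv s hs
  have isIsometry_B : IsIsometry B := isIsometry_mulLeftEquiv (conj s) hs_conj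
  have isIsometry_C : IsIsometry C := (isIsometry_mulRightEquiv (conj s) hs_conj).trans isIsometry_B
  have triality (x y : Oct) : B (mul x y) = mul (C x) (A y) :=
    conj_mul_mul_eq_of_normSq_eq_one hs x y
  exact ⟨A, B, C, ⟨isIsometry_A, isIsometry_B, isIsometry_C, triality⟩, fun _ => rfl, fun _ => rfl,
    fun x => ⟨rfl, (flexible (conj s) x).symm⟩⟩

/-- for a unit cube root of unity s, the triple
(L(s), L(s̄), x ↦ s̄·(x·s̄) = (s̄·x)·s̄) is a triality triple. -/
theorem triality_triple_of_cube_root (s : Oct) (hs : normSq s = 1)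
    (hcube : mul s (mul s s) = one) :
    ∃ A B C : Oct ≃ₗ[ℝ] Oct, IsTriality A B C
      ∧ (∀ y, A y = mul s y)
      ∧ (∀ y, B y = mul (conj s) y)
      ∧ (∀ x, C x = mul (conj s) (mul x (conj s))
          ∧ mul (conj s) (mul x (conj s)) = mul (mul (conj s) x) (conj s)) :=
  triality_triple_of_cube_root_general s hs
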